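/- arXiv:1909.06579 — 2 statements merged into one kernel-verified Lean document; each statement's English description precedes it below -/
import Mathlib

section
/- Let m ≥ 2 and let σ be the canonical surface measure on the unit sphere S = {P ∈ EuclideanSpace ℝ m : ‖P‖ = 1}. Then for every X ∈ EuclideanSpace ℝ m with ‖X‖ < 1, the vector-valued integral ∫_{P ∈ S} ‖P − X‖^{−m} • (P − X) dσ(P) equals 0. -/
/-!
Let `Ψ y = y - ‖y‖ X`, so that `Ψ (s P) = s (P - X)` for `P` on the unit sphere and `s > 0`. As
`‖X‖ < 1`, `Ψ` is a bijection of `ℝ^m ∖ {0}` onto itself, and its Jacobian determinant at `y` is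
`1 - ⟪X, y⟫ / ‖y‖ > 0` (a rank-one perturbation of the identity). In polar coordinates

  `∫ ‖y‖⁻¹ 1_{‖Ψ y‖ < 1} Ψ y dy = ∫_S (∫_0^{1/‖P - X‖} s^(m-1) ds) (P - X) dσ(P)
     = m⁻¹ ∫_S ‖P - X‖^(-m) (P - X) dσ(P)`.

On the other hand, with `w = Ψ y`, one has
`‖y‖ det Ψ'(y) = ‖y‖ - ⟪X, y⟫ = √(⟪X, w⟫² + (1 - ‖X‖²) ‖w‖²) =: D w`
(`chordDisc_shear`), so the left-hand side is `∫_{‖w‖ < 1} (D w)⁻¹ w dw`. The function `D` is even,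
hence this integral vanishes. Geometrically, evenness of `D` is the classical observation that
the two ends of a chord through `X` meet the sphere at the same angle.
-/

open MeasureTheory Metric

open scoped RealInnerProductSpace

section Shell

variable {E : Type*} [NormedAddCommGroup E] [InnerProductSpace ℝ E]

/-- The radially homogeneous map sending `s P` to `s (P - X)` for unit vectors `P` and `s ≥ 0`. -/
noncomputable def shear (X y : E) : E := y - ‖y‖ • X

/-- Half the length of the chord cut out by the unit sphere on the line through `X` in
direction `w`, times `‖w‖`. -/
noncomputable def chordDisc (X w : E) : ℝ := √(⟪X, w⟫ ^ 2 + (1 - ‖X‖ ^ 2) * ‖w‖ ^ 2)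

lemma chordDisc_neg (X w : E) : chordDisc X (-w) = chordDisc X w := by
  simp [chordDisc]

lemma inner_lt_norm {X y : E} (hX : ‖X‖ < 1) (hy : y ≠ 0) : ⟪X, y⟫ < ‖y‖ := by
  have h1 := real_inner_le_norm X y
  have h2 : 0 < ‖y‖ := norm_pos_iff.2 hy
  nlinarith

lemma chordDisc_shear {X y : E} (hX : ‖X‖ < 1) (hy : y ≠ 0) :
    chordDisc X (shear X y) = ‖y‖ - ⟪X, y⟫ := by
  have h : ⟪X, shear X y⟫ ^ 2 + (1 - ‖X‖ ^ 2) * ‖shear X y‖ ^ 2 = (‖y‖ - ⟪X, y⟫) ^ 2 := by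
    rw [shear, inner_sub_right, real_inner_smul_right, real_inner_self_eq_norm_sq,
      norm_sub_sq_real, real_inner_smul_right, norm_smul, norm_norm, real_inner_comm]
    ring
  rw [chordDisc, h, Real.sqrt_sq (sub_nonneg.2 (inner_lt_norm hX hy).le)]

lemma shear_injective {X : E} (hX : ‖X‖ < 1) : Function.Injective (shear X) := by
  intro y z h
  have h1 : y - z = (‖y‖ - ‖z‖) • X := by
    simp only [shear] at h
    rw [sub_smul, sub_eq_sub_iff_add_eq_add]
    rw [sub_eq_sub_iff_add_eq_add] at h
    rw [h, add_comm]
  have h2 : ‖y - z‖ ≤ ‖y - z‖ * ‖X‖ := by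
    conv_lhs => rw [h1, norm_smul, Real.norm_eq_abs]
    gcongr
    exact abs_norm_sub_norm_le y z
  have h3 : ‖y - z‖ = 0 := by nlinarith [norm_nonneg (y - z)]
  exact sub_eq_zero.1 (norm_eq_zero.1 h3)

lemma shear_surjective {X : E} (hX : ‖X‖ < 1) : Function.Surjective (shear X) := by
  intro w
  have hb : 0 < 1 - ‖X‖ ^ 2 := by nlinarith [norm_nonneg X]
  -- `N` is the nonnegative root of `‖w + N X‖ = N`, a quadratic equation in `N`.
  set N : ℝ := (⟪X, w⟫ + chordDisc X w) / (1 - ‖X‖ ^ 2) with hN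
  have hD : chordDisc X w ^ 2 = ⟪X, w⟫ ^ 2 + (1 - ‖X‖ ^ 2) * ‖w‖ ^ 2 :=
    Real.sq_sqrt (by positivity)
  have habs : |⟪X, w⟫| ≤ chordDisc X w :=
    Real.abs_le_sqrt (le_add_of_nonneg_right (by positivity))
  have hN0 : 0 ≤ N := div_nonneg (by linarith [neg_abs_le ⟪X, w⟫]) hb.le
  have hNb : N * (1 - ‖X‖ ^ 2) - ⟪X, w⟫ = chordDisc X w := by
    rw [hN, div_mul_cancel₀ _ hb.ne']; ring
  have hnorm : ‖w + N • X‖ = N := by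
    rw [← sq_eq_sq₀ (norm_nonneg _) hN0, norm_add_sq_real, real_inner_smul_right, norm_smul,
      Real.norm_eq_abs, mul_pow, sq_abs, real_inner_comm]
    rw [← hNb] at hD
    refine mul_left_cancel₀ hb.ne' ?_
    linear_combination -hD
  exact ⟨w + N • X, by simp [shear, hnorm]⟩

lemma shear_ne_zero {X y : E} (hX : ‖X‖ < 1) (hy : y ≠ 0) : shear X y ≠ 0 := fun h ↦
  hy (shear_injective hX (h.trans (by simp [shear])))

lemma image_shear {X : E} (hX : ‖X‖ < 1) : shear X '' {0}ᶜ = {0}ᶜ := by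
  rw [Set.image_compl_eq ⟨shear_injective hX, shear_surjective hX⟩, Set.image_singleton]
  simp [shear]

/-- The derivative of `shear X` at `y`. -/
noncomputable def shearDeriv (X y : E) : E →L[ℝ] E :=
  ContinuousLinearMap.id ℝ E - (‖y‖⁻¹ • innerSL ℝ y).smulRight X

lemma hasFDerivAt_norm_of_ne {y : E} (hy : y ≠ 0) :
    HasFDerivAt (fun z : E ↦ ‖z‖) (‖y‖⁻¹ • innerSL ℝ y) y := by
  have h := (hasStrictFDerivAt_norm_sq y).hasFDerivAt.sqrt (by simpa using hy)
  simp only [Real.sqrt_sq (norm_nonneg _)] at h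
  convert h using 1
  ext v
  have : ‖y‖ ≠ 0 := norm_ne_zero_iff.2 hy
  simp
  field_simp

lemma hasFDerivAt_shear (X : E) {y : E} (hy : y ≠ 0) :
    HasFDerivAt (shear X) (shearDeriv X y) y :=
  (hasFDerivAt_id y).sub ((hasFDerivAt_norm_of_ne hy).smul_const X)

lemma det_shearDeriv [FiniteDimensional ℝ E] (X y : E) :
    (shearDeriv X y).det = 1 - ‖y‖⁻¹ * ⟪X, y⟫ := by
  have h : (shearDeriv X y : E →ₗ[ℝ] E)
      = LinearMap.transvection (-((‖y‖⁻¹ • innerSL ℝ y : E →L[ℝ] ℝ) : E →ₗ[ℝ] ℝ)) X := by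
    ext v
    simp [shearDeriv, LinearMap.transvection.apply, sub_eq_add_neg]
  rw [ContinuousLinearMap.det, h, LinearMap.transvection.det]
  simp [real_inner_comm, sub_eq_add_neg]

variable [FiniteDimensional ℝ E] [MeasurableSpace E] [BorelSpace E]

open Classical in
/-- The change of variables `w = shear X y`, followed by the symmetry `w ↦ -w`. -/
lemma integral_shear_eq_zero [Nontrivial E] (μ : Measure E) [μ.IsAddHaarMeasure] {X : E}
    (hX : ‖X‖ < 1) :
    ∫ y in ({0}ᶜ : Set E), (if ‖shear X y‖ < 1 then ‖y‖⁻¹ • shear X y else 0) ∂μ = 0 := by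
  have key := integral_image_eq_integral_abs_det_fderiv_smul μ
    (measurableSet_singleton (0 : E)).compl
    (fun y hy ↦ (hasFDerivAt_shear X hy).hasFDerivWithinAt) (shear_injective hX).injOn
    (fun w ↦ if ‖w‖ < 1 then (chordDisc X w)⁻¹ • w else 0)
  rw [image_shear hX] at key
  conv_lhs at key => rw [restrict_compl_singleton]
  have hodd : ∫ w, (if ‖w‖ < 1 then (chordDisc X w)⁻¹ • w else 0) ∂μ = 0 := by
    have : IsAddTorsionFree E := .of_isTorsionFree ℝ E
    rw [← self_eq_neg, ← integral_neg]
    conv_lhs => rw [← integral_neg_eq_self]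
    congr 1 with w
    simp only [norm_neg, chordDisc_neg]
    split_ifs <;> simp
  refine Eq.trans ?_ (key.symm.trans hodd)
  refine setIntegral_congr_fun (measurableSet_singleton (0 : E)).compl fun y (hy : y ≠ 0) ↦ ?_
  have hn : 0 < ‖y‖ := norm_pos_iff.2 hy
  have hlt := sub_pos.2 (inner_lt_norm hX hy)
  have hdet : (shearDeriv X y).det = ‖y‖⁻¹ * (‖y‖ - ⟪X, y⟫) := by
    rw [det_shearDeriv]; field_simp
  simp only [hdet, chordDisc_shear hX hy]
  rw [abs_of_pos (by positivity)]
  split_ifs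
  · rw [smul_smul, mul_assoc, mul_inv_cancel₀ hlt.ne', mul_one]
  · simp

open Classical in
/-- Polar coordinates: the weighted volume integral is a multiple of the surface integral. -/
lemma integral_shear_eq_sphere [Nontrivial E] (μ : Measure E) [μ.IsAddHaarMeasure] {X : E}
    (hX : ‖X‖ < 1) :
    ∫ y in ({0}ᶜ : Set E), (if ‖shear X y‖ < 1 then ‖y‖⁻¹ • shear X y else 0) ∂μ
      = (Module.finrank ℝ E : ℝ)⁻¹ • ∫ P : sphere (0 : E) 1,
        (‖(P : E) - X‖ ^ Module.finrank ℝ E)⁻¹ • ((P : E) - X) ∂μ.toSphere := by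
  set n := Module.finrank ℝ E with hn
  have hn0 : 0 < n := Module.finrank_pos
  set S : Set (sphere (0 : E) 1 × Set.Ioi (0 : ℝ)) := {p | (p.2 : ℝ) * ‖(p.1 : E) - X‖ < 1}
  have hS : MeasurableSet S := by
    apply IsOpen.measurableSet
    exact isOpen_lt (by fun_prop) continuous_const
  set g : sphere (0 : E) 1 × Set.Ioi (0 : ℝ) → E := S.indicator fun p ↦ (p.1 : E) - X with hg
  have hdist (P : sphere (0 : E) 1) : 1 - ‖X‖ ≤ ‖(P : E) - X‖ := by
    simpa using norm_sub_norm_le (P : E) X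
  have hdist' (P : sphere (0 : E) 1) : 0 < ‖(P : E) - X‖ := by linarith [hdist P]
  have hc : 0 < (1 - ‖X‖)⁻¹ := inv_pos.2 (by linarith)
  have hint : Integrable g (μ.toSphere.prod (.volumeIoiPow (n - 1))) := by
    rw [hg, integrable_indicator_iff hS]
    refine Measure.integrableOn_of_bounded (M := 1 + ‖X‖) ?_ ?_ ?_
    · have hsub : S ⊆ Set.univ ×ˢ Set.Iio ⟨(1 - ‖X‖)⁻¹, hc⟩ := by
        rintro ⟨P, r⟩ h
        refine ⟨trivial, ?_⟩
        change (r : ℝ) < (1 - ‖X‖)⁻¹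
        have h' : (r : ℝ) * ‖(P : E) - X‖ < 1 := h
        have hr : 0 < (r : ℝ) := r.2
        rw [lt_inv_comm₀ hr (by linarith), ← one_div, lt_div_iff₀ hr]
        nlinarith [hdist P]
      refine ((measure_mono hsub).trans_lt ?_).ne
      rw [Measure.prod_prod, Measure.volumeIoiPow_apply_Iio]
      exact ENNReal.mul_lt_top (measure_lt_top _ _) ENNReal.ofReal_lt_top
    · apply Continuous.aestronglyMeasurable
      fun_prop
    · refine .of_forall fun p ↦ (norm_sub_le _ _).trans (by simp)
  have hpolar : ∫ y in ({0}ᶜ : Set E),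
      (if ‖shear X y‖ < 1 then ‖y‖⁻¹ • shear X y else 0) ∂μ
        = ∫ p, g p ∂(μ.toSphere.prod (.volumeIoiPow (n - 1))) := by
    rw [← integral_subtype_comap (measurableSet_singleton _).compl,
      ← μ.measurePreserving_homeomorphUnitSphereProd.integral_comp
        (Homeomorph.measurableEmbedding _) g]
    congr 1
    funext y
    have hy : ‖(y : E)‖ ≠ 0 := norm_ne_zero_iff.2 y.2
    have h1 : ((homeomorphUnitSphereProd E y).1 : E) - X = ‖(y : E)‖⁻¹ • shear X y := by
      simp [shear, smul_sub, smul_smul, hy]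
    have h2 : homeomorphUnitSphereProd E y ∈ S ↔ ‖shear X (y : E)‖ < 1 := by
      change _ * ‖_ - X‖ < 1 ↔ _
      rw [h1, norm_smul]
      simp [hy]
    simp only [hg, Set.indicator_apply, h2, h1]
  rw [hpolar, integral_prod _ hint, ← integral_smul]
  congr 1
  funext P
  have hr : 0 < ‖(P : E) - X‖⁻¹ := inv_pos.2 (hdist' P)
  have hslice (r : Set.Ioi (0 : ℝ)) : g (P, r)
      = (Set.Iio (⟨‖(P : E) - X‖⁻¹, hr⟩ : Set.Ioi (0 : ℝ))).indicator
        (fun _ ↦ (P : E) - X) r := by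
    have : (P, r) ∈ S ↔ r ∈ Set.Iio (⟨‖(P : E) - X‖⁻¹, hr⟩ : Set.Ioi (0 : ℝ)) := by
      change (r : ℝ) * ‖(P : E) - X‖ < 1 ↔ (r : ℝ) < ‖(P : E) - X‖⁻¹
      rw [← one_div, lt_div_iff₀ (hdist' P)]
    simp only [hg, Set.indicator_apply, this]
  simp only [hslice]
  rw [integral_indicator measurableSet_Iio, setIntegral_const, Measure.real,
    Measure.volumeIoiPow_apply_Iio, ENNReal.toReal_ofReal (by positivity), smul_smul,
    Nat.sub_add_cancel hn0, Nat.cast_pred hn0, sub_add_cancel, inv_pow, div_eq_inv_mul]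

end Shell

/-- **Newton's shell theorem in Euclidean space.**
For `m ≥ 2`, integrating the vector field `P ↦ ‖P − X‖^{−m} • (P − X)` over the unit sphere
(with its canonical surface measure) gives `0`, for any `X` with `‖X‖ < 1`. -/
theorem stmt5 (m : ℕ) (hm : 2 ≤ m) (X : EuclideanSpace ℝ (Fin m)) (hX : ‖X‖ < 1) :
    ∫ P : sphere (0 : EuclideanSpace ℝ (Fin m)) 1,
        (‖(P : EuclideanSpace ℝ (Fin m)) - X‖ ^ m)⁻¹ • ((P : EuclideanSpace ℝ (Fin m)) - X)
      ∂((volume : Measure (EuclideanSpace ℝ (Fin m))).toSphere) = 0 := by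
  have : Nontrivial (EuclideanSpace ℝ (Fin m)) :=
    Module.nontrivial_of_finrank_pos (R := ℝ) (by rw [finrank_euclideanSpace_fin]; omega)
  have h := integral_shear_eq_sphere (volume : Measure (EuclideanSpace ℝ (Fin m))) hX
  rw [integral_shear_eq_zero _ hX, finrank_euclideanSpace_fin] at h
  exact (smul_eq_zero.1 h.symm).resolve_left (by positivity)
end

section
/- Let m ≥ 2, let σ be the canonical surface measure on the unit sphere S = {P ∈ EuclideanSpace ℝ m : ‖P‖ = 1}, let R₁ > 0, define a : (0,∞) → ℝ by a(r) = ∫_{R₁}^{r} t^{1−m} dt, and define F(X) = ∫_{P ∈ S} a(‖P − X‖)² dσ(P) for X in the open unit ball. Then for every X with 0 < ‖X‖ and ‖X‖ + R₁ < 1, the function F is differentiable at X and there exists a real number g > 0 such that the gradient of F at X equals g • X. -/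
/-!
Why the gradient points outwards. Write `ρ = ‖P - X‖` and `x = ‖X‖`. Differentiating under the
integral sign gives `∇F(X) = ∫ 2 a(ρ) ρ^{-m} (X - P) dσ(P)`. The reflection in the line `ℝ X` is an
isometry fixing `X`, and `σ` is invariant under linear isometries, so `∇F(X) = g X` for some real
`g`. Pairing with `X`,

  `g x² = ∫ 2 a(ρ) ρ^{-m} (x² - ⟪X, P⟫) dσ(P)`.

Newton's shell theorem (`shell`, `shell_vector`) says that a uniformly charged sphere exerts no force
on interior points: `∫ ρ^{-m} (x² - ⟪X, P⟫) dσ(P) = 0`. Hence any constant may be subtracted from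
`a(ρ)` in the formula for `g`. Since `ρ² = 1 - 2 ⟪X, P⟫ + x²`, the factor `x² - ⟪X, P⟫` has the sign of
`ρ - ρ₀` with `ρ₀ = √(1 - x²)`; as `a` is strictly increasing, subtracting `a(ρ₀)` makes the integrand
nonnegative, and it is positive at `P = X / x`. So `g > 0` (`integral_pos_aux`).

The shell theorem comes from an ordinary differential equation in `y`. For a unit vector `e`, put
`t = ⟪e, P⟫`, `q = 1 - 2 y t + y²` and `J(y) = ∫ q^{-m/2} (y - t) dσ(P)`. Integration by parts on the
sphere, `∫ f'(t) (1 - t²) dσ = (m - 1) ∫ f(t) t dσ` (`zonal`), applied to `f(t) = q^{-m/2}`, yields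
`y J'(y) + (m - 1) J(y) = 0` on `(-1, 1)`. So `y^{m-1} J(y)` is constant, hence equal to its value `0` at
`y = 0`. The integration by parts formula is itself obtained by differentiating, at angle `0`,
the invariance of `σ` under rotations in the planes containing `e`.
-/

open MeasureTheory Metric
open Set Filter Topology
open scoped Pointwise

/-! ### Invariance of the surface measure under linear isometries -/

section
variable {E : Type*} [NormedAddCommGroup E] [InnerProductSpace ℝ E]

/-- The self-map of the unit sphere induced by a linear isometry. -/
def sphereMap (L : E ≃ₗᵢ[ℝ] E) (P : sphere (0 : E) 1) : sphere (0 : E) 1 :=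
  ⟨L P, by simp⟩

lemma continuous_sphereMap (L : E ≃ₗᵢ[ℝ] E) : Continuous (sphereMap L) := by
  unfold sphereMap; fun_prop

variable [MeasurableSpace E] [BorelSpace E]

/-- A measure on the unit sphere is rotation invariant if every linear isometry of the ambient space
(orientation-reversing ones included) preserves it. -/
def RotInvariant (σ : Measure (sphere (0 : E) 1)) : Prop :=
  ∀ L : E ≃ₗᵢ[ℝ] E, MeasurePreserving (sphereMap L) σ σ

lemma rotInvariant_toSphere (μ : Measure E)
    (hμ : ∀ L : E ≃ₗᵢ[ℝ] E, MeasurePreserving L μ μ) : RotInvariant μ.toSphere := by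
  intro L
  refine ⟨(continuous_sphereMap L).measurable, ?_⟩
  ext s hs
  rw [Measure.map_apply (continuous_sphereMap L).measurable hs,
    Measure.toSphere_apply' _ hs,
    Measure.toSphere_apply' _ ((continuous_sphereMap L).measurable hs)]
  congr 1
  rw [← (hμ L).measure_preimage_emb L.toHomeomorph.measurableEmbedding
    (Ioo (0 : ℝ) 1 • (Subtype.val '' s : Set E))]
  congr 1
  ext y
  simp only [mem_preimage, Set.mem_smul, mem_image]
  constructor
  · rintro ⟨r, hr, _, ⟨P, hP, rfl⟩, rfl⟩
    exact ⟨r, hr, _, ⟨sphereMap L P, hP, rfl⟩, by simp [sphereMap]⟩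
  · rintro ⟨r, hr, _, ⟨P, hP, rfl⟩, h⟩
    refine ⟨r, hr, _, ⟨sphereMap L.symm P, ?_, rfl⟩, ?_⟩
    · have : sphereMap L (sphereMap L.symm P) = P := by ext; simp [sphereMap]
      change sphereMap L (sphereMap L.symm P) ∈ s
      rwa [this]
    · apply L.injective
      simp [sphereMap, ← h]

lemma RotInvariant.integral_comp {F : Type*} [NormedAddCommGroup F] [NormedSpace ℝ F]
    {σ : Measure (sphere (0 : E) 1)} (hσ : RotInvariant σ)
    (L : E ≃ₗᵢ[ℝ] E) (f : E → F) :
    ∫ P, f (L (P : E)) ∂σ = ∫ P, f (P : E) ∂σ := by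
  have hinv : ∀ L : E ≃ₗᵢ[ℝ] E, ∀ P, sphereMap L.symm (sphereMap L P) = P := by
    intro L P; ext; simp [sphereMap]
  let e : sphere (0 : E) 1 ≃ᵐ sphere (0 : E) 1 :=
    { toFun := sphereMap L
      invFun := sphereMap L.symm
      left_inv := hinv L
      right_inv := fun P => by simpa using hinv L.symm P
      measurable_toFun := (continuous_sphereMap L).measurable
      measurable_invFun := (continuous_sphereMap L.symm).measurable }
  exact (hσ L).integral_comp e.measurableEmbedding (fun P => f (P : E))

end

/-! ### Differentiation under the integral sign -/

/-- Differentiation under the integral over a compact space, when the partial gradient is jointly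
continuous: local compactness of `H` turns joint continuity into a uniform local bound. -/
lemma hasGradientAt_integral {H S : Type*} [NormedAddCommGroup H] [InnerProductSpace ℝ H]
    [FiniteDimensional ℝ H] [TopologicalSpace S] [CompactSpace S] [SecondCountableTopology S]
    [MeasurableSpace S]
    [BorelSpace S] (σ : Measure S) [IsFiniteMeasure σ] {U : Set H} (hU : IsOpen U) {x₀ : H}
    (hx₀ : x₀ ∈ U) (G : H → S → ℝ) (G' : H → S → H) (hG : ∀ x ∈ U, Continuous (G x))
    (hG' : ContinuousOn (fun p : H × S => G' p.1 p.2) (U ×ˢ univ))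
    (h : ∀ x ∈ U, ∀ s, HasGradientAt (fun x => G x s) (G' x s) x) :
    HasGradientAt (fun x => ∫ s, G x s ∂σ) (∫ s, G' x₀ s ∂σ) x₀ := by
  have := FiniteDimensional.proper_real H
  obtain ⟨K, hK, hKx, hKU⟩ := exists_compact_subset hU hx₀
  have hcont : Continuous (G' x₀) := by
    have : ContinuousOn (fun s => G' x₀ s) univ :=
      hG'.comp (f := fun s => (x₀, s)) (by fun_prop) (fun s _ => ⟨hx₀, mem_univ _⟩)
    exact continuousOn_univ.1 this
  obtain ⟨C, hC⟩ := (hK.prod isCompact_univ).exists_bound_of_continuousOn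
    (hG'.mono (prod_mono hKU subset_rfl))
  have hint : Integrable (G' x₀) σ := hcont.integrable_of_hasCompactSupport
    (HasCompactSupport.of_compactSpace _)
  have key := hasFDerivAt_integral_of_dominated_of_fderiv_le (𝕜 := ℝ) (μ := σ) (s := K) (x₀ := x₀)
    (F := G)
    (F' := fun x s => InnerProductSpace.toDual ℝ H (G' x s)) (bound := fun _ => C)
    (mem_interior_iff_mem_nhds.1 hKx)
    (by filter_upwards [hU.mem_nhds hx₀] with x hx using (hG x hx).aestronglyMeasurable)
    ((hG x₀ hx₀).integrable_of_hasCompactSupport (HasCompactSupport.of_compactSpace _))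
    (((InnerProductSpace.toDual ℝ H).continuous.comp hcont).aestronglyMeasurable)
    (Eventually.of_forall fun s x hx => by
      simpa using hC (x, s) ⟨hx, mem_univ _⟩)
    (integrable_const _)
    (Eventually.of_forall fun s x hx => (h x (hKU hx) s).hasFDerivAt)
  have e : InnerProductSpace.toDual ℝ H (∫ s, G' x₀ s ∂σ)
      = ∫ s, InnerProductSpace.toDual ℝ H (G' x₀ s) ∂σ :=
    ((InnerProductSpace.toDual ℝ H).toContinuousLinearEquiv.toContinuousLinearMap.integral_comp_comm
      hint).symm
  rw [hasGradientAt_iff_hasFDerivAt, e]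
  exact key

/-! ### Integration by parts for zonal functions -/

section
variable {E : Type*} [NormedAddCommGroup E] [InnerProductSpace ℝ E] [FiniteDimensional ℝ E]
  [MeasurableSpace E] [BorelSpace E]

open scoped RealInnerProductSpace

lemma continuous_integrable {F : Type*} [NormedAddCommGroup F]
    {σ : Measure (sphere (0 : E) 1)} [IsFiniteMeasure σ]
    {f : sphere (0 : E) 1 → F} (hf : Continuous f) : Integrable f σ := by
  have := FiniteDimensional.proper_real E
  exact hf.integrable_of_hasCompactSupport (HasCompactSupport.of_compactSpace _)

omit [FiniteDimensional ℝ E] [MeasurableSpace E] [BorelSpace E] in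
lemma inner_mem_Icc {e : E} (he : ‖e‖ = 1) (P : sphere (0 : E) 1) :
    ⟪e, (P : E)⟫ ∈ Icc (-1 : ℝ) 1 := by
  have h := abs_real_inner_le_norm e (P : E)
  rw [he, norm_eq_of_mem_sphere, one_mul] at h
  exact abs_le.1 h

omit [FiniteDimensional ℝ E] in
/-- Invariance under the reflections `P ↦ 2 ⟪u, P⟫ u - P` in the lines spanned by
`u = cos (α / 2) e + sin (α / 2) v`. These send the coordinates `⟪e, P⟫` and `⟪v, P⟫` to the pair below,
so they give a one-parameter family of isometries; the value at `α = 0` is the right-hand side. -/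
lemma integral_rotation {σ : Measure (sphere (0 : E) 1)} (hσ : RotInvariant σ)
    {e v : E} (he : ‖e‖ = 1) (hv : ‖v‖ = 1) (hev : ⟪e, v⟫ = 0) (H : ℝ → ℝ → ℝ) (α : ℝ) :
    ∫ P, H ⟪Real.cos α • e + Real.sin α • v, (P : E)⟫ ⟪Real.sin α • e - Real.cos α • v, (P : E)⟫ ∂σ
      = ∫ P, H ⟪e, (P : E)⟫ (-⟪v, (P : E)⟫) ∂σ := by
  have main : ∀ α : ℝ, ∫ P, H ⟪Real.cos α • e + Real.sin α • v, (P : E)⟫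
      ⟪Real.sin α • e - Real.cos α • v, (P : E)⟫ ∂σ
        = ∫ P, H ⟪e, (P : E)⟫ ⟪v, (P : E)⟫ ∂σ := by
    intro α
    set u : E := Real.cos (α / 2) • e + Real.sin (α / 2) • v with hu
    have hee : ⟪e, e⟫ = 1 := by rw [real_inner_self_eq_norm_sq, he]; norm_num
    have hvv : ⟪v, v⟫ = 1 := by rw [real_inner_self_eq_norm_sq, hv]; norm_num
    have hve : ⟪v, e⟫ = 0 := by rw [real_inner_comm]; exact hev
    have hu1 : ‖u‖ = 1 := by
      have : ‖u‖ ^ 2 = 1 := by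
        rw [← real_inner_self_eq_norm_sq, hu]
        simp only [inner_add_left, inner_add_right, real_inner_smul_left, real_inner_smul_right,
          hee, hvv, hve, hev]
        linear_combination Real.cos_sq_add_sin_sq (α / 2)
      nlinarith [norm_nonneg u]
    have hR : ∀ P : E, (ℝ ∙ u).reflection P = (2 * ⟪u, P⟫) • u - P := by
      intro P
      rw [Submodule.reflection_singleton_apply, hu1]
      simp [mul_smul, two_smul]
    have hc : Real.cos α = 2 * Real.cos (α / 2) ^ 2 - 1 := by
      rw [← Real.cos_two_mul]; ring_nf
    have hs : Real.sin α = 2 * Real.sin (α / 2) * Real.cos (α / 2) := by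
      rw [← Real.sin_two_mul]; ring_nf
    rw [← hσ.integral_comp (ℝ ∙ u).reflection (fun P => H ⟪e, P⟫ ⟪v, P⟫)]
    congr 1
    ext P
    have hcs := Real.cos_sq_add_sin_sq (α / 2)
    congr 1
    · rw [hR, hu]
      simp only [inner_add_left, inner_add_right, real_inner_smul_left, real_inner_smul_right,
          hee, hev, inner_sub_right]
      rw [hc, hs]; ring
    · rw [hR, hu]
      simp only [inner_add_left, inner_add_right, real_inner_smul_left, real_inner_smul_right,
          hvv, hve, inner_sub_right, inner_sub_left]
      rw [hc, hs]
      linear_combination (-2 * ⟪v, (P : E)⟫) * hcs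
  rw [main α, ← main 0]
  simp

/-- The derivative at `α = 0` of the identity `integral_rotation` for `H t s = f t * s`. -/
lemma zonal_direction {σ : Measure (sphere (0 : E) 1)} [IsFiniteMeasure σ] (hσ : RotInvariant σ)
    {e v : E} (he : ‖e‖ = 1) (hv : ‖v‖ = 1) (hev : ⟪e, v⟫ = 0) {f f' : ℝ → ℝ}
    (hf : ∀ t ∈ Icc (-1 : ℝ) 1, HasDerivAt f (f' t) t) (hf' : ContinuousOn f' (Icc (-1) 1)) :
    ∫ P, f' ⟪e, (P : E)⟫ * ⟪v, (P : E)⟫ ^ 2 ∂σ = ∫ P, f ⟪e, (P : E)⟫ * ⟪e, (P : E)⟫ ∂σ := by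
  have := FiniteDimensional.proper_real E
  have hfc : ContinuousOn f (Icc (-1) 1) := fun t ht => (hf t ht).continuousAt.continuousWithinAt
  set c : ℝ → E := fun α => Real.cos α • e + Real.sin α • v with hc
  set d : ℝ → E := fun α => Real.sin α • e - Real.cos α • v with hd
  have hcn : ∀ α, ‖c α‖ = 1 := by
    intro α
    have hve : ⟪v, e⟫ = 0 := by rw [real_inner_comm]; exact hev
    have hee : ⟪e, e⟫ = 1 := by rw [real_inner_self_eq_norm_sq, he]; norm_num
    have hvv : ⟪v, v⟫ = 1 := by rw [real_inner_self_eq_norm_sq, hv]; norm_num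
    have : ‖c α‖ ^ 2 = 1 := by
      rw [← real_inner_self_eq_norm_sq, hc]
      simp only [inner_add_left, inner_add_right, real_inner_smul_left, real_inner_smul_right,
        hee, hvv, hve, hev]
      linear_combination Real.cos_sq_add_sin_sq α
    nlinarith [norm_nonneg (c α)]
  have hcc : Continuous c := by fun_prop
  have hdc : Continuous d := by fun_prop
  have hcd : ∀ α, HasDerivAt c (-d α) α := by
    intro α
    have := ((Real.hasDerivAt_cos α).smul_const e).add ((Real.hasDerivAt_sin α).smul_const v)
    convert! this using 1
    simp [hd]; abel
  have hdd : ∀ α, HasDerivAt d (c α) α := by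
    intro α
    have := ((Real.hasDerivAt_sin α).smul_const e).sub ((Real.hasDerivAt_cos α).smul_const v)
    convert! this using 1
    simp [hc]
  have hder := hasGradientAt_integral σ isOpen_univ (mem_univ (0 : ℝ))
    (fun α P => f ⟪c α, (P : E)⟫ * ⟪d α, (P : E)⟫)
    (fun α P => f' ⟪c α, (P : E)⟫ * (-⟪d α, (P : E)⟫) * ⟪d α, (P : E)⟫
      + f ⟪c α, (P : E)⟫ * ⟪c α, (P : E)⟫)
    (fun α _ => by
      have h1 : Continuous fun P : sphere (0 : E) 1 => f ⟪c α, (P : E)⟫ :=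
        hfc.comp_continuous (by fun_prop) fun P => inner_mem_Icc (hcn α) P
      exact h1.mul (by fun_prop))
    (by
      have h1 : Continuous fun p : ℝ × sphere (0 : E) 1 => f ⟪c p.1, (p.2 : E)⟫ :=
        hfc.comp_continuous (by fun_prop) fun p => inner_mem_Icc (hcn p.1) p.2
      have h2 : Continuous fun p : ℝ × sphere (0 : E) 1 => f' ⟪c p.1, (p.2 : E)⟫ :=
        hf'.comp_continuous (by fun_prop) fun p => inner_mem_Icc (hcn p.1) p.2
      exact (((h2.mul (by fun_prop)).mul (by fun_prop)).add
        (h1.mul (by fun_prop))).continuousOn)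
    (fun α _ P => by
      apply HasDerivAt.hasGradientAt'
      have h1 : HasDerivAt (fun α => ⟪c α, (P : E)⟫) (-⟪d α, (P : E)⟫) α := by
        simpa using (hcd α).inner ℝ (hasDerivAt_const α (P : E))
      have h2 : HasDerivAt (fun α => ⟪d α, (P : E)⟫) (⟪c α, (P : E)⟫) α := by
        simpa using (hdd α).inner ℝ (hasDerivAt_const α (P : E))
      exact ((hf _ (inner_mem_Icc (hcn α) P)).comp α h1).mul h2)
  have hconst := integral_rotation hσ he hv hev (fun t s => f t * s)
  have hz := hder.hasDerivAt'
  rw [show (fun α => ∫ P, f ⟪c α, (P : E)⟫ * ⟪d α, (P : E)⟫ ∂σ) = fun _ : ℝ =>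
    ∫ P, f ⟪e, (P : E)⟫ * (-⟪v, (P : E)⟫) ∂σ from funext hconst] at hz
  have h0 := hz.unique (hasDerivAt_const _ _)
  have hc0 : c 0 = e := by simp [hc]
  have hd0 : d 0 = -v := by simp [hd]
  rw [hc0, hd0] at h0
  have h1 : Continuous fun P : sphere (0 : E) 1 => f ⟪e, (P : E)⟫ :=
    hfc.comp_continuous (by fun_prop) fun P => inner_mem_Icc he P
  have h2 : Continuous fun P : sphere (0 : E) 1 => f' ⟪e, (P : E)⟫ :=
    hf'.comp_continuous (by fun_prop) fun P => inner_mem_Icc he P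
  rw [integral_add
    (f := fun P : sphere (0 : E) 1 => f' ⟪e, (P : E)⟫ * (-⟪-v, (P : E)⟫) * ⟪-v, (P : E)⟫)
    (g := fun P : sphere (0 : E) 1 => f ⟪e, (P : E)⟫ * ⟪e, (P : E)⟫)
    (continuous_integrable ((h2.mul (by fun_prop)).mul (by fun_prop)))
    (continuous_integrable (h1.mul (by fun_prop)))] at h0
  have h3 : ∫ P : sphere (0 : E) 1, f' ⟪e, (P : E)⟫ * (-⟪-v, (P : E)⟫) * ⟪-v, (P : E)⟫ ∂σ
      = -∫ P, f' ⟪e, (P : E)⟫ * ⟪v, (P : E)⟫ ^ 2 ∂σ := by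
    rw [← integral_neg]
    congr 1; ext P; rw [inner_neg_left]; ring
  linarith

omit [MeasurableSpace E] [BorelSpace E] in
lemma sum_sq_inner_orthogonal {e : E} (he : ‖e‖ = 1) (P : E) :
    ∑ i, ⟪((stdOrthonormalBasis ℝ (ℝ ∙ e)ᗮ i : (ℝ ∙ e)ᗮ) : E), P⟫ ^ 2 = ‖P‖ ^ 2 - ⟪e, P⟫ ^ 2 := by
  have h := (stdOrthonormalBasis ℝ (ℝ ∙ e)ᗮ).sum_sq_inner_right ((ℝ ∙ e)ᗮ.orthogonalProjectionOnto P)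
  have h2 := Submodule.norm_sq_eq_add_norm_sq_projection P (ℝ ∙ e)
  have h3 : ‖(ℝ ∙ e).orthogonalProjectionOnto P‖ ^ 2 = ⟪e, P⟫ ^ 2 := by
    rw [Submodule.coe_norm, ← Submodule.starProjection_apply,
      Submodule.starProjection_unit_singleton ℝ he, norm_smul, he]
    simp
  rw [h3] at h2
  rw [h2, ← h]
  simp

/-- Integration by parts on the sphere for a function of `⟪e, P⟫`: the sum of `zonal_direction` over an
orthonormal basis of the orthogonal complement of `e`. -/
lemma zonal {σ : Measure (sphere (0 : E) 1)} [IsFiniteMeasure σ] (hσ : RotInvariant σ)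
    {e : E} (he : ‖e‖ = 1) {f f' : ℝ → ℝ}
    (hf : ∀ t ∈ Icc (-1 : ℝ) 1, HasDerivAt f (f' t) t) (hf' : ContinuousOn f' (Icc (-1) 1)) :
    ∫ P, f' ⟪e, (P : E)⟫ * (1 - ⟪e, (P : E)⟫ ^ 2) ∂σ
      = (Module.finrank ℝ E - 1 : ℝ) * ∫ P, f ⟪e, (P : E)⟫ * ⟪e, (P : E)⟫ ∂σ := by
  set b := stdOrthonormalBasis ℝ (ℝ ∙ e)ᗮ with hb
  have h2 : Continuous fun P : sphere (0 : E) 1 => f' ⟪e, (P : E)⟫ :=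
    hf'.comp_continuous (by fun_prop) fun P => inner_mem_Icc he P
  have he0 : e ≠ 0 := by rintro rfl; simp at he
  have hdim := Submodule.finrank_add_finrank_orthogonal (ℝ ∙ e)
  rw [finrank_span_singleton he0] at hdim
  calc ∫ P, f' ⟪e, (P : E)⟫ * (1 - ⟪e, (P : E)⟫ ^ 2) ∂σ
      = ∫ P, ∑ i, f' ⟪e, (P : E)⟫ * ⟪(b i : E), (P : E)⟫ ^ 2 ∂σ := by
        congr 1; ext P
        rw [← Finset.mul_sum, sum_sq_inner_orthogonal he, norm_eq_of_mem_sphere]; norm_num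
    _ = ∑ i, ∫ P, f' ⟪e, (P : E)⟫ * ⟪(b i : E), (P : E)⟫ ^ 2 ∂σ :=
        integral_finsetSum _ fun i _ => continuous_integrable (h2.mul (by fun_prop))
    _ = ∑ i, ∫ P, f ⟪e, (P : E)⟫ * ⟪e, (P : E)⟫ ∂σ := by
        refine Finset.sum_congr rfl fun i _ => zonal_direction hσ he ?_ ?_ hf hf'
        · exact b.orthonormal.1 i
        · exact Submodule.mem_orthogonal_singleton_iff_inner_right.1 (b i).2
    _ = _ := by
        rw [Finset.sum_const, ← hdim]; simp

end

/-! ### Newton's shell theorem -/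

section
variable {E : Type*} [NormedAddCommGroup E] [InnerProductSpace ℝ E] [FiniteDimensional ℝ E]
  [MeasurableSpace E] [BorelSpace E]

open scoped RealInnerProductSpace

lemma q_pos {y t : ℝ} (hy : y ∈ Ioo (-1 : ℝ) 1) (ht : t ∈ Icc (-1 : ℝ) 1) :
    0 < 1 - 2 * y * t + y ^ 2 := by
  obtain ⟨h1, h2⟩ := hy
  obtain ⟨h3, h4⟩ := ht
  nlinarith [mul_nonneg (sub_nonneg.2 h4) (by linarith : (0:ℝ) ≤ 1 + t),
    sq_nonneg (y - t), mul_pos (sub_pos.2 h2) (by linarith : (0:ℝ) < 1 + y)]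

lemma shell_hasDerivAt {σ : Measure (sphere (0 : E) 1)} [IsFiniteMeasure σ] {e : E} (he : ‖e‖ = 1)
    (p : ℝ) {y : ℝ} (hy : y ∈ Ioo (-1 : ℝ) 1) :
    HasDerivAt (fun y => ∫ P : sphere (0 : E) 1,
        (1 - 2 * y * ⟪e, (P : E)⟫ + y ^ 2) ^ (-p) * (y - ⟪e, (P : E)⟫) ∂σ)
      (∫ P : sphere (0 : E) 1, ((1 - 2 * y * ⟪e, (P : E)⟫ + y ^ 2) ^ (-p)
        - 2 * p * (1 - 2 * y * ⟪e, (P : E)⟫ + y ^ 2) ^ (-p - 1) * (y - ⟪e, (P : E)⟫) ^ 2) ∂σ) y := by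
  have := FiniteDimensional.proper_real E
  have hq : ∀ r : ℝ, ContinuousOn (fun x : ℝ × sphere (0 : E) 1 =>
      (1 - 2 * x.1 * ⟪e, (x.2 : E)⟫ + x.1 ^ 2) ^ r) (Ioo (-1) 1 ×ˢ univ) := by
    intro r
    refine ContinuousOn.rpow_const (Continuous.continuousOn (by fun_prop)) ?_
    rintro ⟨x, P⟩ ⟨hx, -⟩
    exact Or.inl (q_pos hx (inner_mem_Icc he P)).ne'
  refine (hasGradientAt_integral σ isOpen_Ioo hy
    (fun y P => (1 - 2 * y * ⟪e, (P : E)⟫ + y ^ 2) ^ (-p) * (y - ⟪e, (P : E)⟫))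
    (fun y P => (1 - 2 * y * ⟪e, (P : E)⟫ + y ^ 2) ^ (-p)
        - 2 * p * (1 - 2 * y * ⟪e, (P : E)⟫ + y ^ 2) ^ (-p - 1) * (y - ⟪e, (P : E)⟫) ^ 2)
    ?_ ?_ ?_).hasDerivAt'
  · intro x hx
    refine Continuous.mul (Continuous.rpow_const (by fun_prop) fun P => ?_) (by fun_prop)
    exact Or.inl (q_pos hx (inner_mem_Icc he P)).ne'
  · exact (hq _).sub (((continuousOn_const).mul (hq _)).mul
      (Continuous.continuousOn (by fun_prop)))
  · intro x hx P
    apply HasDerivAt.hasGradientAt'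
    set t := ⟪e, (P : E)⟫
    have h0 : HasDerivAt (fun x : ℝ => 1 - 2 * x * t + x ^ 2) (-(2 * t) + 2 * x) x := by
      have := ((((hasDerivAt_id x).const_mul 2).mul_const t).const_sub 1).add (hasDerivAt_pow 2 x)
      convert! this using 1
      simp
    have h1 := (h0.rpow_const (p := -p) (Or.inl (q_pos hx (inner_mem_Icc he P)).ne')).mul
      ((hasDerivAt_id x).sub_const t)
    convert! h1 using 1
    simp only [id]
    ring

/-- **Newton's shell theorem**: at the interior point `x • e`, the component along `e` of the field
`∫ ‖P - x e‖ ^ (-m) (x e - P) dσ(P)` vanishes. The base of the power is `‖P - x e‖ ^ 2`. -/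
lemma shell {σ : Measure (sphere (0 : E) 1)} [IsFiniteMeasure σ] (hσ : RotInvariant σ)
    (hdim : 2 ≤ Module.finrank ℝ E) {e : E} (he : ‖e‖ = 1) {x : ℝ} (hx0 : 0 < x) (hx1 : x < 1) :
    ∫ P : sphere (0 : E) 1, (1 - 2 * x * ⟪e, (P : E)⟫ + x ^ 2) ^ (-(Module.finrank ℝ E / 2 : ℝ))
      * (x - ⟪e, (P : E)⟫) ∂σ = 0 := by
  set m := Module.finrank ℝ E with hm
  set p : ℝ := m / 2 with hp
  set J : ℝ → ℝ := fun y => ∫ P : sphere (0 : E) 1,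
        (1 - 2 * y * ⟪e, (P : E)⟫ + y ^ 2) ^ (-p) * (y - ⟪e, (P : E)⟫) ∂σ with hJ
  set D : ℝ → ℝ := fun y => ∫ P : sphere (0 : E) 1, ((1 - 2 * y * ⟪e, (P : E)⟫ + y ^ 2) ^ (-p)
        - 2 * p * (1 - 2 * y * ⟪e, (P : E)⟫ + y ^ 2) ^ (-p - 1) * (y - ⟪e, (P : E)⟫) ^ 2) ∂σ with hD
  have hJD : ∀ y ∈ Ioo (-1 : ℝ) 1, HasDerivAt J (D y) y := fun y hy => shell_hasDerivAt he p hy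
  have hode : ∀ y ∈ Ioo (-1 : ℝ) 1, y * D y + (m - 1) * J y = 0 := by
    intro y hy
    have hqc : ∀ r : ℝ, Continuous fun P : sphere (0 : E) 1 =>
        (1 - 2 * y * ⟪e, (P : E)⟫ + y ^ 2) ^ r := fun r =>
      Continuous.rpow_const (by fun_prop) fun P => Or.inl (q_pos hy (inner_mem_Icc he P)).ne'
    have hz := zonal hσ he (f := fun t => (1 - 2 * y * t + y ^ 2) ^ (-p))
      (f' := fun t => 2 * p * y * (1 - 2 * y * t + y ^ 2) ^ (-p - 1))
      (fun t ht => by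
        have h0 : HasDerivAt (fun t : ℝ => 1 - 2 * y * t + y ^ 2) (-(2 * y)) t := by
          have := (((hasDerivAt_id t).const_mul (2 * y)).const_sub 1).add_const (y ^ 2)
          convert! this using 1
          simp
        have h1 := h0.rpow_const (p := -p) (Or.inl (q_pos hy ht).ne')
        convert! h1 using 1
        ring)
      (continuousOn_const.mul (ContinuousOn.rpow_const (Continuous.continuousOn (by fun_prop))
        fun t ht => Or.inl (q_pos hy ht).ne'))
    rw [← hm] at hz
    rw [← integral_const_mul, ← sub_eq_zero, ← integral_sub] at hz
    · rw [hD, hJ]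
      simp only
      rw [← integral_const_mul, ← integral_const_mul, ← integral_add, ← hz]
      · congr 1
        ext P
        have hq := q_pos hy (inner_mem_Icc he P)
        set t := ⟪e, (P : E)⟫ with ht
        have h1 : (1 - 2 * y * t + y ^ 2) ^ (-p)
            = (1 - 2 * y * t + y ^ 2) ^ (-p - 1) * (1 - 2 * y * t + y ^ 2) := by
          conv_rhs => rw [← Real.rpow_add_one hq.ne']
          ring_nf
        have hmp : (m : ℝ) = 2 * p := by rw [hp]; ring
        rw [h1, hmp]
        ring
      · exact continuous_integrable (continuous_const.mul ((hqc _).sub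
          ((continuous_const.mul (hqc _)).mul (by fun_prop))))
      · exact continuous_integrable (continuous_const.mul ((hqc _).mul (by fun_prop)))
    · exact continuous_integrable ((continuous_const.mul (hqc _)).mul (by fun_prop))
    · exact continuous_integrable (continuous_const.mul ((hqc _).mul (by fun_prop)))
  -- An exponent `m - 1 = k + 1 ≥ 1` is needed for `y ^ (m - 1) * J y` to vanish at `y = 0`.
  obtain ⟨k, hk⟩ : ∃ k, m = k + 2 := ⟨m - 2, by omega⟩
  have hder : ∀ y ∈ Ioo (-1 : ℝ) 1, HasDerivAt (fun y => y ^ (k + 1) * J y) 0 y := by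
    intro y hy
    have h := (hasDerivAt_pow (k + 1) y).mul (hJD y hy)
    convert! h using 1
    have h2 := hode y hy
    rw [hk] at h2
    push_cast at h2 ⊢
    linear_combination (-y ^ k) * h2
  have hmem : ∀ y ∈ Icc 0 x, y ∈ Ioo (-1 : ℝ) 1 := fun y hy =>
    ⟨by linarith [hy.1], by linarith [hy.2]⟩
  have hc := constant_of_has_deriv_right_zero (f := fun y => y ^ (k + 1) * J y) (a := 0) (b := x)
    (fun y hy => (hder y (hmem y hy)).continuousAt.continuousWithinAt)
    (fun y hy => (hder y (hmem y ⟨hy.1, hy.2.le⟩)).hasDerivWithinAt) x ⟨hx0.le, le_rfl⟩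
  simp only [ne_eq, Nat.add_eq_zero_iff, one_ne_zero, and_false, not_false_eq_true, zero_pow,
    zero_mul, mul_eq_zero, pow_eq_zero_iff, hx0.ne', false_or] at hc
  exact hc

end

/-! ### The gradient of the boundary term -/

section
variable {E : Type*} [NormedAddCommGroup E] [InnerProductSpace ℝ E] [FiniteDimensional ℝ E]
  [MeasurableSpace E] [BorelSpace E]

open scoped RealInnerProductSpace

omit [MeasurableSpace E] [BorelSpace E] in
lemma hasGradientAt_sq_norm {m : ℕ} {a : ℝ → ℝ}
    (ha : ∀ r : ℝ, 0 < r → HasDerivAt a (r ^ (1 - (m : ℤ))) r) {P X : E} (h : P ≠ X) :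
    HasGradientAt (fun X => a ‖P - X‖ ^ 2)
      ((2 * a ‖P - X‖ * (‖P - X‖ ^ m)⁻¹) • (X - P)) X := by
  have hr : 0 < ‖X - P‖ := norm_pos_iff.2 (sub_ne_zero.2 h.symm)
  have hsq : √(‖X - P‖ ^ 2) = ‖X - P‖ := Real.sqrt_sq hr.le
  have h1 : HasFDerivAt (fun X : E => ‖X - P‖ ^ 2) _ X :=
    ((hasFDerivAt_id X).sub_const P).norm_sq
  have h2 : HasDerivAt (fun q => a √q ^ 2) _ (‖X - P‖ ^ 2) :=
    HasDerivAt.pow (HasDerivAt.comp (‖X - P‖ ^ 2) (ha (√(‖X - P‖ ^ 2)) (by rwa [hsq]))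
      (Real.hasDerivAt_sqrt (by positivity))) 2
  have h3 := h2.comp_hasFDerivAt X h1
  rw [hasGradientAt_iff_hasFDerivAt]
  convert! h3 using 1
  · ext Y
    simp [Real.sqrt_sq, norm_sub_rev P Y]
  · rw [norm_sub_rev P X]
    ext v
    simp only [hsq, map_smul, smul_apply, InnerProductSpace.toDual_apply_apply,
      Function.comp, id, ContinuousLinearMap.comp_apply, innerSL_apply_apply, smul_eq_mul,
      ContinuousLinearMap.id_apply, nsmul_eq_mul]
    rw [zpow_sub₀ hr.ne', zpow_one, zpow_natCast]
    push_cast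
    field_simp

omit [FiniteDimensional ℝ E] [MeasurableSpace E] [BorelSpace E] in
lemma norm_pow_inv_eq (m : ℕ) {X e : E} (hX : X = ‖X‖ • e) (P : sphere (0 : E) 1) :
    (‖(P : E) - X‖ ^ m)⁻¹ = (1 - 2 * ‖X‖ * ⟪e, (P : E)⟫ + ‖X‖ ^ 2) ^ (-(m / 2 : ℝ)) := by
  have h : 1 - 2 * ‖X‖ * ⟪e, (P : E)⟫ + ‖X‖ ^ 2 = ‖(P : E) - X‖ ^ 2 := by
    have : ⟪X, (P : E)⟫ = ‖X‖ * ⟪e, (P : E)⟫ := by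
      conv_lhs => rw [hX, real_inner_smul_left]
    rw [norm_sub_sq_real, norm_eq_of_mem_sphere, real_inner_comm X, this]
    ring
  rw [h, Real.rpow_neg (by positivity), ← Real.rpow_natCast _ 2, ← Real.rpow_mul (norm_nonneg _)]
  congr 1
  rw [← Real.rpow_natCast]
  congr 1
  push_cast; ring

/-- The shell theorem `shell` at `X`, multiplied by `‖X‖`. -/
lemma shell_vector {σ : Measure (sphere (0 : E) 1)} [IsFiniteMeasure σ] (hσ : RotInvariant σ)
    (hdim : 2 ≤ Module.finrank ℝ E) {X : E} (hX0 : 0 < ‖X‖) (hX1 : ‖X‖ < 1) :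
    ∫ P : sphere (0 : E) 1, (‖(P : E) - X‖ ^ Module.finrank ℝ E)⁻¹
      * (‖X‖ ^ 2 - ⟪X, (P : E)⟫) ∂σ = 0 := by
  have he : ‖‖X‖⁻¹ • X‖ = 1 := by
    rw [norm_smul, norm_inv, norm_norm, inv_mul_cancel₀ hX0.ne']
  have hXe : X = ‖X‖ • (‖X‖⁻¹ • X) := by rw [smul_smul, mul_inv_cancel₀ hX0.ne', one_smul]
  have h := shell hσ hdim he hX0 hX1
  have : (fun P : sphere (0 : E) 1 => (‖(P : E) - X‖ ^ Module.finrank ℝ E)⁻¹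
      * (‖X‖ ^ 2 - ⟪X, (P : E)⟫)) = fun P : sphere (0 : E) 1 => ‖X‖ *
      ((1 - 2 * ‖X‖ * ⟪‖X‖⁻¹ • X, (P : E)⟫ + ‖X‖ ^ 2) ^ (-(Module.finrank ℝ E / 2 : ℝ))
      * (‖X‖ - ⟪‖X‖⁻¹ • X, (P : E)⟫)) := by
    ext P
    rw [norm_pow_inv_eq _ hXe, real_inner_smul_left]
    field_simp
  rw [this, integral_const_mul, h, mul_zero]

/-- Only monotonicity of `a` matters: by the shell theorem `a` may be replaced by `a - a ρ`, where
`ρ = √(1 - ‖X‖ ^ 2)` is the value of `‖P - X‖` at which `‖X‖ ^ 2 - ⟪X, P⟫` changes sign. -/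
lemma integral_pos_aux {σ : Measure (sphere (0 : E) 1)} [IsFiniteMeasure σ] [σ.IsOpenPosMeasure]
    (hσ : RotInvariant σ) (hdim : 2 ≤ Module.finrank ℝ E) {a : ℝ → ℝ}
    (hac : ContinuousOn a (Ioi 0)) (ham : StrictMonoOn a (Ioi 0))
    {X : E} (hX0 : 0 < ‖X‖) (hX1 : ‖X‖ < 1) :
    0 < ∫ P : sphere (0 : E) 1, 2 * a ‖(P : E) - X‖ * (‖(P : E) - X‖ ^ Module.finrank ℝ E)⁻¹
      * (‖X‖ ^ 2 - ⟪X, (P : E)⟫) ∂σ := by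
  have := FiniteDimensional.proper_real E
  set m := Module.finrank ℝ E
  have hpos : ∀ P : sphere (0 : E) 1, 0 < ‖(P : E) - X‖ := by
    intro P
    have := norm_sub_norm_le (P : E) X
    rw [norm_eq_of_mem_sphere] at this
    linarith
  have hr2 : ∀ P : sphere (0 : E) 1, ‖(P : E) - X‖ ^ 2 = 1 - 2 * ⟪X, (P : E)⟫ + ‖X‖ ^ 2 := by
    intro P
    rw [norm_sub_sq_real, norm_eq_of_mem_sphere, real_inner_comm]; ring
  have hac' : Continuous fun P : sphere (0 : E) 1 => a ‖(P : E) - X‖ :=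
    hac.comp_continuous (by fun_prop) hpos
  have hinv : Continuous fun P : sphere (0 : E) 1 => (‖(P : E) - X‖ ^ m)⁻¹ :=
    Continuous.inv₀ (by fun_prop) fun P => (pow_pos (hpos P) m).ne'
  set ρ := √(1 - ‖X‖ ^ 2) with hρ
  have h1x : 0 < 1 - ‖X‖ ^ 2 := by nlinarith
  have hρ0 : 0 < ρ := Real.sqrt_pos.2 h1x
  have hρ2 : ρ ^ 2 = 1 - ‖X‖ ^ 2 := Real.sq_sqrt h1x.le
  have hle : ∀ P : sphere (0 : E) 1, ⟪X, (P : E)⟫ ≤ ‖X‖ ^ 2 → a ρ ≤ a ‖(P : E) - X‖ := by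
    intro P h
    refine ham.monotoneOn hρ0 (hpos P) ?_
    rw [← pow_le_pow_iff_left₀ hρ0.le (norm_nonneg _) two_ne_zero, hρ2, hr2]
    linarith
  have hlt : ∀ P : sphere (0 : E) 1, ‖X‖ ^ 2 < ⟪X, (P : E)⟫ → a ‖(P : E) - X‖ < a ρ := by
    intro P h
    refine ham (hpos P) hρ0 ?_
    rw [← pow_lt_pow_iff_left₀ (norm_nonneg _) hρ0.le two_ne_zero, hρ2, hr2]
    linarith
  have key : 0 < ∫ P : sphere (0 : E) 1, (a ‖(P : E) - X‖ - a ρ) * (‖(P : E) - X‖ ^ m)⁻¹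
      * (‖X‖ ^ 2 - ⟪X, (P : E)⟫) ∂σ := by
    refine Continuous.integral_pos_of_hasCompactSupport_nonneg_nonzero
      (x := ⟨‖X‖⁻¹ • X, by simp [norm_smul, hX0.ne']⟩)
      (((hac'.sub continuous_const).mul hinv).mul (by fun_prop))
      (HasCompactSupport.of_compactSpace _) ?_ ?_
    · intro P
      have hi : 0 < (‖(P : E) - X‖ ^ m)⁻¹ := inv_pos.2 (pow_pos (hpos P) m)
      rcases le_or_gt ⟪X, (P : E)⟫ (‖X‖ ^ 2) with h | h
      · exact mul_nonneg (mul_nonneg (sub_nonneg.2 (hle P h)) hi.le) (sub_nonneg.2 h)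
      · exact mul_nonneg_of_nonpos_of_nonpos
          (mul_nonpos_of_nonpos_of_nonneg (sub_nonpos.2 (hlt P h).le) hi.le) (sub_nonpos.2 h.le)
    · set P : sphere (0 : E) 1 := ⟨‖X‖⁻¹ • X, by simp [norm_smul, hX0.ne']⟩ with hP
      have h : ‖X‖ ^ 2 < ⟪X, (P : E)⟫ := by
        rw [hP]
        simp only [real_inner_smul_right, real_inner_self_eq_norm_sq]
        field_simp
        nlinarith
      exact mul_ne_zero (mul_ne_zero (sub_ne_zero.2 (hlt P h).ne)
        (inv_pos.2 (pow_pos (hpos P) m)).ne') (sub_neg.2 h).ne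
  have hshell := shell_vector hσ hdim hX0 hX1
  have hsplit : (fun P : sphere (0 : E) 1 => 2 * a ‖(P : E) - X‖ * (‖(P : E) - X‖ ^ m)⁻¹
      * (‖X‖ ^ 2 - ⟪X, (P : E)⟫)) = fun P : sphere (0 : E) 1 =>
      2 * ((a ‖(P : E) - X‖ - a ρ) * (‖(P : E) - X‖ ^ m)⁻¹ * (‖X‖ ^ 2 - ⟪X, (P : E)⟫))
      + 2 * a ρ * ((‖(P : E) - X‖ ^ m)⁻¹ * (‖X‖ ^ 2 - ⟪X, (P : E)⟫)) := by
    ext P; ring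
  rw [hsplit, integral_add, integral_const_mul, integral_const_mul, hshell]
  · linarith
  · exact continuous_integrable (continuous_const.mul
      (((hac'.sub continuous_const).mul hinv).mul (by fun_prop)))
  · exact continuous_integrable (continuous_const.mul (hinv.mul (by fun_prop)))

lemma exists_hasGradientAt {σ : Measure (sphere (0 : E) 1)} [IsFiniteMeasure σ]
    [σ.IsOpenPosMeasure] (hσ : RotInvariant σ) (hdim : 2 ≤ Module.finrank ℝ E) {a : ℝ → ℝ}
    (ha : ∀ r : ℝ, 0 < r → HasDerivAt a (r ^ (1 - (Module.finrank ℝ E : ℤ))) r)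
    {X : E} (hX0 : 0 < ‖X‖) (hX1 : ‖X‖ < 1) :
    ∃ g : ℝ, 0 < g ∧
      HasGradientAt (fun X => ∫ P : sphere (0 : E) 1, a ‖(P : E) - X‖ ^ 2 ∂σ) (g • X) X := by
  have := FiniteDimensional.proper_real E
  set m := Module.finrank ℝ E with hm
  have hac : ContinuousOn a (Ioi 0) := fun r hr => (ha r hr).continuousAt.continuousWithinAt
  have ham : StrictMonoOn a (Ioi 0) := by
    refine strictMonoOn_of_deriv_pos (convex_Ioi 0) hac fun r hr => ?_
    rw [interior_Ioi] at hr
    rw [(ha r hr).deriv]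
    exact zpow_pos hr _
  have hpos : ∀ Y ∈ ball (0 : E) 1, ∀ P : sphere (0 : E) 1, 0 < ‖(P : E) - Y‖ := by
    intro Y hY P
    have := norm_sub_norm_le (P : E) Y
    rw [norm_eq_of_mem_sphere] at this
    rw [mem_ball_zero_iff] at hY
    linarith
  have hXb : X ∈ ball (0 : E) 1 := mem_ball_zero_iff.2 hX1
  have hcont : ContinuousOn (fun p : E × sphere (0 : E) 1 =>
      (2 * a ‖(p.2 : E) - p.1‖ * (‖(p.2 : E) - p.1‖ ^ m)⁻¹) • (p.1 - (p.2 : E)))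
      (ball 0 1 ×ˢ univ) := by
    have h1 : ContinuousOn (fun p : E × sphere (0 : E) 1 => a ‖(p.2 : E) - p.1‖)
        (ball 0 1 ×ˢ univ) :=
      hac.comp (f := fun p : E × sphere (0 : E) 1 => ‖(p.2 : E) - p.1‖)
        (Continuous.continuousOn (by fun_prop)) fun p hp => hpos p.1 hp.1 p.2
    have h2 : ContinuousOn (fun p : E × sphere (0 : E) 1 => (‖(p.2 : E) - p.1‖ ^ m)⁻¹)
        (ball 0 1 ×ˢ univ) :=
      ContinuousOn.inv₀ (Continuous.continuousOn (by fun_prop))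
        fun p hp => (pow_pos (hpos p.1 hp.1 p.2) m).ne'
    exact ((continuousOn_const.mul h1).mul h2).smul (Continuous.continuousOn (by fun_prop))
  have hgrad := hasGradientAt_integral σ isOpen_ball hXb
    (fun X P => a ‖(P : E) - X‖ ^ 2)
    (fun X P => (2 * a ‖(P : E) - X‖ * (‖(P : E) - X‖ ^ m)⁻¹) • (X - (P : E)))
    (fun Y hY => (hac.comp_continuous (by fun_prop) (hpos Y hY)).pow 2) hcont
    (fun Y hY P => hasGradientAt_sq_norm ha (sub_ne_zero.1 (norm_pos_iff.1 (hpos Y hY P))))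
  set V := ∫ P : sphere (0 : E) 1,
    (2 * a ‖(P : E) - X‖ * (‖(P : E) - X‖ ^ m)⁻¹) • (X - (P : E)) ∂σ with hV
  have hint : Integrable (fun P : sphere (0 : E) 1 =>
      (2 * a ‖(P : E) - X‖ * (‖(P : E) - X‖ ^ m)⁻¹) • (X - (P : E))) σ := by
    refine continuous_integrable (continuousOn_univ.1 ?_)
    exact hcont.comp (f := fun P => (X, P)) (by fun_prop) fun P _ => ⟨hXb, mem_univ _⟩
  -- `V` is fixed by the reflection in the line `ℝ X`, hence lies on that line.
  have hVX : V ∈ (ℝ ∙ X) := by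
    rw [← Submodule.reflection_eq_self_iff]
    set R := (ℝ ∙ X).reflection
    have hRX : R X = X :=
      Submodule.reflection_mem_subspace_eq_self (Submodule.mem_span_singleton_self X)
    have h1 : R V = ∫ P : sphere (0 : E) 1,
        R ((2 * a ‖(P : E) - X‖ * (‖(P : E) - X‖ ^ m)⁻¹) • (X - (P : E))) ∂σ :=
      (R.toContinuousLinearEquiv.toContinuousLinearMap.integral_comp_comm hint).symm
    rw [h1, hV, ← hσ.integral_comp R
      (fun P => (2 * a ‖P - X‖ * (‖P - X‖ ^ m)⁻¹) • (X - P))]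
    congr 1
    ext P
    have h2 : ‖R (P : E) - X‖ = ‖(P : E) - X‖ := by
      conv_lhs => rw [← hRX, ← map_sub, R.norm_map]
    rw [h2, map_smul, map_sub, hRX]
  obtain ⟨g, hg⟩ := Submodule.mem_span_singleton.1 hVX
  refine ⟨g, ?_, by rw [hg]; exact hgrad⟩
  have hin : ⟪X, V⟫ = ∫ P : sphere (0 : E) 1,
      2 * a ‖(P : E) - X‖ * (‖(P : E) - X‖ ^ m)⁻¹ * (‖X‖ ^ 2 - ⟪X, (P : E)⟫) ∂σ := by
    rw [hV, ← integral_inner hint]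
    congr 1
    ext P
    rw [real_inner_smul_right, inner_sub_right, real_inner_self_eq_norm_sq]
  have hp := integral_pos_aux hσ hdim hac ham hX0 hX1
  rw [← hm, ← hin, ← hg, real_inner_smul_right, real_inner_self_eq_norm_sq] at hp
  exact pos_of_mul_pos_left hp (by positivity)

end

/-- **The gradient of the boundary L² term points radially away from the center.**
For `m ≥ 2`, `R₁ > 0`, `a(r) = ∫_{R₁}^{r} t^{1−m} dt`, and
`F(X) = ∫_{P ∈ S^{m−1}} a(‖P − X‖)² dσ(P)`, for every `X` with `0 < ‖X‖` and `‖X‖ + R₁ < 1`,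
`F` is differentiable at `X` and its gradient at `X` is a positive multiple of `X`. -/
theorem stmt7 (m : ℕ) (hm : 2 ≤ m) (R₁ : ℝ) (hR₁ : 0 < R₁)
    (a : ℝ → ℝ) (ha : ∀ r : ℝ, a r = ∫ t in R₁..r, t ^ (1 - (m : ℤ)))
    (F : EuclideanSpace ℝ (Fin m) → ℝ)
    (hF : ∀ X : EuclideanSpace ℝ (Fin m),
      F X = ∫ P : sphere (0 : EuclideanSpace ℝ (Fin m)) 1,
          (a ‖(P : EuclideanSpace ℝ (Fin m)) - X‖) ^ 2
        ∂((volume : Measure (EuclideanSpace ℝ (Fin m))).toSphere))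
    (X : EuclideanSpace ℝ (Fin m)) (hX0 : 0 < ‖X‖) (hX : ‖X‖ + R₁ < 1) :
    DifferentiableAt ℝ F X ∧ ∃ g : ℝ, 0 < g ∧ gradient F X = g • X := by
  have hda : ∀ r : ℝ, 0 < r → HasDerivAt a (r ^ (1 - (m : ℤ))) r := by
    intro r hr
    rw [show a = fun r => ∫ t in R₁..r, t ^ (1 - (m : ℤ)) from funext ha]
    have hc : ContinuousOn (fun t : ℝ => t ^ (1 - (m : ℤ))) (Ioi 0) := fun t ht =>
      (continuousAt_zpow₀ t _ (Or.inl (ne_of_gt ht))).continuousWithinAt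
    refine intervalIntegral.integral_hasDerivAt_right ?_ ?_ (hc.continuousAt (Ioi_mem_nhds hr))
    · refine (hc.mono fun t ht => ?_).intervalIntegrable
      exact (lt_min hR₁ hr).trans_le ht.1
    · exact hc.stronglyMeasurableAtFilter isOpen_Ioi r hr
  obtain ⟨g, hg, hgrad⟩ := exists_hasGradientAt
    (rotInvariant_toSphere (volume : Measure (EuclideanSpace ℝ (Fin m)))
      fun L => L.measurePreserving)
    (by rw [finrank_euclideanSpace_fin]; exact hm) (a := a)
    (by rw [finrank_euclideanSpace_fin]; exact hda) hX0 (by linarith)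
  rw [← funext hF] at hgrad
  exact ⟨hgrad.differentiableAt, g, hg, hgrad.gradient⟩
end
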